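/- arXiv:1309.1986 — 2 statements merged into one kernel-verified Lean document; each statement's English description precedes it below -/
import Mathlib

section
/- Every 3-dimensional metabelian Poisson algebra over a field k is isomorphic to one of the following: k³_{(A,B,C,θ₀)} for some (A,B,C,θ₀) ∈ 𝔠(2); or k³_{(θ,f)} for some (θ,f) ∈ MA₁(k²,k); or k³_{(γ,f)} for some (γ,f) ∈ MA₂(k²,k). -/
/-!
Let `I` be the abelian subspace containing all products and brackets. If `dim I` is `0` or `3`
both operations vanish. Otherwise a complement of `I` identifies `E` with `k² × k`, and the
operations are determined by their values on `I` and on the complement.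

* `dim I = 2` (`exists_cMat_of_isPoisson`): with `e` spanning the complement, left and right
  multiplication by `e` and the bracket with `e` restrict to endomorphisms `A`, `B`, `C` of `I`,
  and `θ₀ = e ⋆ e`. Associativity and the Leibniz law on triples with two or three entries `e`
  are the relations of `𝔠(2)`.
* `dim I = 1` (`exists_MA_of_isPoisson`): let `z` span `I`. If `x z = s z`, then
  `s² z = (x x) z = 0`, so `x z = 0`, and likewise `z x = 0`: the product is `θ(·,·) z` for a form
  `θ` on `k²`. The bracket is given by a form `f` and by `{x, z} = γ(x) z`. If `γ = 0` the algebra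
  comes from `MA₁`. If `γ ≠ 0`, the Leibniz law reads `θ(x,y) γ(w) = 0`, so `θ = 0`, and the
  Jacobi identity is the cyclic condition in `MA₂`.
-/

universe u

section Defs

variable (k : Type u) [Field k]

/-- A map in two variables is `k`-bilinear. -/
def IsBilin {A B C : Type u} [AddCommGroup A] [Module k A] [AddCommGroup B] [Module k B]
    [AddCommGroup C] [Module k C] (f : A → B → C) : Prop :=
  (∀ a a' b, f (a + a') b = f a b + f a' b) ∧
  (∀ (c : k) (a b), f (c • a) b = c • f a b) ∧
  (∀ a b b', f a (b + b') = f a b + f a b') ∧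
  (∀ (c : k) (a b), f a (c • b) = c • f a b)

/-- `(A, mul, br)` is a (not necessarily commutative or unital) Poisson algebra over `k`:
`mul` is a bilinear associative multiplication, `br` is a Lie bracket and the
Leibniz law `[ab, c] = [a,c]b + a[b,c]` holds. -/
structure IsPoisson {A : Type u} [AddCommGroup A] [Module k A]
    (mul br : A → A → A) : Prop where
  mul_bilin : IsBilin k mul
  br_bilin : IsBilin k br
  mul_assoc : ∀ a b c, mul (mul a b) c = mul a (mul b c)
  br_alt : ∀ a, br a a = 0
  jacobi : ∀ a b c, br (br a b) c + br (br b c) a + br (br c a) b = 0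
  leibniz : ∀ a b c, br (mul a b) c = mul (br a c) b + mul a (br b c)

variable (P V : Type u) [AddCommGroup P] [Module k P] [AddCommGroup V] [Module k V]

/-- A pre-crossed datum `Ω(P,V) = (⇀, ◁, ϑ, ·_V, ▷, f, [-,-]_V)` of a Poisson algebra `P`
by a vector space `V`:  seven bilinear maps.  Here `hl = ⇀`, `hr = ◁`, `theta = ϑ`,
`mulV = ·_V`, `lact = ▷`, `cf = f` and `brV = [-,-]_V`. -/
structure PreCrossedDatum where
  hl : P → V → V
  hr : V → P → V
  theta : P → P → V
  mulV : V → V → V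
  lact : P → V → V
  cf : P → P → V
  brV : V → V → V
  hl_bilin : IsBilin k hl
  hr_bilin : IsBilin k hr
  theta_bilin : IsBilin k theta
  mulV_bilin : IsBilin k mulV
  lact_bilin : IsBilin k lact
  cf_bilin : IsBilin k cf
  brV_bilin : IsBilin k brV

variable {k P V}

/-- The multiplication `(p,x) ⋆ (q,y) = (pq, ϑ(p,q) + p⇀y + x◁q + x·y)` of `P ♯ V`. -/
def sharpMul (mulP : P → P → P) (Om : PreCrossedDatum k P V) :
    P × V → P × V → P × V :=
  fun a b => (mulP a.1 b.1,
    Om.theta a.1 b.1 + Om.hl a.1 b.2 + Om.hr a.2 b.1 + Om.mulV a.2 b.2)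

/-- The bracket `{(p,x), (q,y)} = ([p,q], f(p,q) + p▷y − q▷x + [x,y]_V)` of `P ♯ V`. -/
def sharpBr (brP : P → P → P) (Om : PreCrossedDatum k P V) :
    P × V → P × V → P × V :=
  fun a b => (brP a.1 b.1,
    Om.cf a.1 b.1 + Om.lact a.1 b.2 - Om.lact b.1 a.2 + Om.brV a.2 b.2)

/-- A pre-crossed datum is a crossed system when `P ♯ V` is a Poisson algebra. -/
def IsCrossedSystem (mulP brP : P → P → P) (Om : PreCrossedDatum k P V) : Prop :=
  IsPoisson k (sharpMul mulP Om) (sharpBr brP Om)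

end Defs

section Iso

variable (k : Type u) [Field k]

/-- Isomorphism of Poisson algebras `(A, mulA, brA) ≅ (B, mulB, brB)`. -/
def PoissonIso {A B : Type u} [AddCommGroup A] [Module k A] [AddCommGroup B] [Module k B]
    (mulA brA : A → A → A) (mulB brB : B → B → B) : Prop :=
  ∃ φ : A ≃ₗ[k] B,
    (∀ x y, φ (mulA x y) = mulB (φ x) (φ y)) ∧
    (∀ x y, φ (brA x y) = brB (φ x) (φ y))

/-- A Poisson algebra is metabelian if it is an extension of an abelian Poisson algebra by
an abelian Poisson algebra: there is a subspace `I`, abelian as a Poisson subalgebra,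
containing all products and brackets (so that the quotient is abelian as well). -/
def IsMetabelian {E : Type u} [AddCommGroup E] [Module k E] (mulE brE : E → E → E) : Prop :=
  ∃ I : Submodule k E,
    (∀ x y, mulE x y ∈ I ∧ brE x y ∈ I) ∧
    (∀ x ∈ I, ∀ y ∈ I, mulE x y = 0 ∧ brE x y = 0)

end Iso

section MASets

variable (k : Type u) [Field k] (n : ℕ)

/-- `MA₁(kⁿ, k)`: pairs `(θ, f)` of bilinear maps `kⁿ × kⁿ → k` with `f` alternating. -/
def MA1 : Type u :=
  {tf : ((Fin n → k) → (Fin n → k) → k) × ((Fin n → k) → (Fin n → k) → k) //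
    IsBilin k tf.1 ∧ IsBilin k tf.2 ∧ ∀ x, tf.2 x x = 0}

/-- `MA₂(kⁿ, k)`: pairs `(γ, f)` with `γ : kⁿ → k` a nonzero linear map and `f` bilinear
alternating, satisfying `γ(x)f(y,z) + γ(y)f(z,x) + γ(z)f(x,y) = 0`. -/
def MA2 : Type u :=
  {gf : ((Fin n → k) →ₗ[k] k) × ((Fin n → k) → (Fin n → k) → k) //
    gf.1 ≠ 0 ∧ IsBilin k gf.2 ∧ (∀ x, gf.2 x x = 0) ∧
    ∀ x y z, gf.1 x * gf.2 y z + gf.1 y * gf.2 z x + gf.1 z * gf.2 x y = 0}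

/-- The multiplication of `k^{n+1}_{(θ,f)}` on `kⁿ × k` (`E_i = (e_i, 0)`,
`E_{n+1} = (0,1)`): `E_i ⋆ E_j = θ(e_i, e_j) E_{n+1}`. -/
def mulMod1 (θ : (Fin n → k) → (Fin n → k) → k) :
    (Fin n → k) × k → (Fin n → k) × k → (Fin n → k) × k :=
  fun u v => (0, θ u.1 v.1)

/-- The bracket of `k^{n+1}_{(θ,f)}`: `{E_i, E_j} = f(e_i, e_j) E_{n+1}`. -/
def brMod1 (f : (Fin n → k) → (Fin n → k) → k) :
    (Fin n → k) × k → (Fin n → k) × k → (Fin n → k) × k :=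
  fun u v => (0, f u.1 v.1)

/-- The (zero) multiplication of `k^{n+1}_{(γ,f)}`. -/
def mulMod2 : (Fin n → k) × k → (Fin n → k) × k → (Fin n → k) × k :=
  fun _ _ => 0

/-- The bracket of `k^{n+1}_{(γ,f)}`: `{E_i, E_j} = f(e_i,e_j) E_{n+1}` and
`{E_i, E_{n+1}} = γ(e_i) E_{n+1}`. -/
def brMod2 (γ : (Fin n → k) →ₗ[k] k) (f : (Fin n → k) → (Fin n → k) → k) :
    (Fin n → k) × k → (Fin n → k) × k → (Fin n → k) × k :=
  fun u v => (0, f u.1 v.1 + γ u.1 * v.2 - γ v.1 * u.2)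

end MASets

section Statement

variable (k : Type u) [Field k]

/-- The set `𝔠(2)` of 4-tuples `(A, B, C, θ₀)` of `2×2` matrices and a vector satisfying
`AB = BA`, `AC = CA = −BC = −CB`, `A² = B² = 0`, `Aθ₀ = Bθ₀`, `Cθ₀ = 0`. -/
def CMatSet2 : Type u :=
  {q : Matrix (Fin 2) (Fin 2) k × Matrix (Fin 2) (Fin 2) k ×
       Matrix (Fin 2) (Fin 2) k × (Fin 2 → k) //
    q.1 * q.2.1 = q.2.1 * q.1 ∧
    q.1 * q.2.2.1 = q.2.2.1 * q.1 ∧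
    q.2.2.1 * q.1 = -(q.2.1 * q.2.2.1) ∧
    -(q.2.1 * q.2.2.1) = -(q.2.2.1 * q.2.1) ∧
    q.1 * q.1 = 0 ∧ q.2.1 * q.2.1 = 0 ∧
    q.1.mulVec q.2.2.2 = q.2.1.mulVec q.2.2.2 ∧
    q.2.2.1.mulVec q.2.2.2 = 0}

/-- The multiplication of `k³_{(A,B,C,θ₀)}` on `k² × k` (`E_i = (e_i, 0)`, `E₃ = (0,1)`):
`E_i ⋆ E₃ = Σ_j b_{ji} E_j`, `E₃ ⋆ E_i = Σ_j a_{ji} E_j`, `E₃ ⋆ E₃ = Σ_j θ_{0j} E_j`. -/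
def mulModC2 (q : Matrix (Fin 2) (Fin 2) k × Matrix (Fin 2) (Fin 2) k ×
    Matrix (Fin 2) (Fin 2) k × (Fin 2 → k)) :
    (Fin 2 → k) × k → (Fin 2 → k) × k → (Fin 2 → k) × k :=
  fun u v => (v.2 • q.2.1.mulVec u.1 + u.2 • q.1.mulVec v.1 + (u.2 * v.2) • q.2.2.2, 0)

/-- The bracket of `k³_{(A,B,C,θ₀)}`: `{E₃, E_i} = Σ_j c_{ji} E_j`. -/
def brModC2 (q : Matrix (Fin 2) (Fin 2) k × Matrix (Fin 2) (Fin 2) k ×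
    Matrix (Fin 2) (Fin 2) k × (Fin 2 → k)) :
    (Fin 2 → k) × k → (Fin 2 → k) × k → (Fin 2 → k) × k :=
  fun u v => (u.2 • q.2.2.1.mulVec v.1 - v.2 • q.2.2.1.mulVec u.1, 0)

/-! ### Transport of structure and coordinates adapted to a subspace -/

section Helpers

variable {k}

theorem IsBilin.zero_left {A B C : Type u} [AddCommGroup A] [Module k A] [AddCommGroup B]
    [Module k B] [AddCommGroup C] [Module k C] {f : A → B → C} (h : IsBilin k f) (b : B) :
    f 0 b = 0 := by
  simpa using h.2.1 0 0 b

theorem IsBilin.zero_right {A B C : Type u} [AddCommGroup A] [Module k A] [AddCommGroup B]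
    [Module k B] [AddCommGroup C] [Module k C] {f : A → B → C} (h : IsBilin k f) (a : A) :
    f a 0 = 0 := by
  simpa using h.2.2.2 0 a 0

theorem IsPoisson.br_skew {A : Type u} [AddCommGroup A] [Module k A] {mul br : A → A → A}
    (h : IsPoisson k mul br) (a b : A) : br a b = -br b a := by
  have h1 := h.br_alt (a + b)
  rw [h.br_bilin.1, h.br_bilin.2.2.1, h.br_bilin.2.2.1, h.br_alt, h.br_alt, zero_add,
    add_zero] at h1
  exact eq_neg_of_add_eq_zero_left h1

/-- The operation on `B` corresponding to an operation on `A` under a linear isomorphism. -/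
def transportOp {A B : Type u} [AddCommGroup A] [Module k A] [AddCommGroup B] [Module k B]
    (φ : A ≃ₗ[k] B) (op : A → A → A) : B → B → B :=
  fun u v => φ (op (φ.symm u) (φ.symm v))

theorem IsBilin.transport {A B : Type u} [AddCommGroup A] [Module k A] [AddCommGroup B]
    [Module k B] (φ : A ≃ₗ[k] B) {op : A → A → A} (h : IsBilin k op) :
    IsBilin k (transportOp φ op) := by
  obtain ⟨h1, h2, h3, h4⟩ := h
  refine ⟨?_, ?_, ?_, ?_⟩ <;> intros <;> simp [transportOp, h1, h2, h3, h4]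

theorem IsPoisson.transport {A B : Type u} [AddCommGroup A] [Module k A] [AddCommGroup B]
    [Module k B] (φ : A ≃ₗ[k] B) {mul br : A → A → A} (h : IsPoisson k mul br) :
    IsPoisson k (transportOp φ mul) (transportOp φ br) where
  mul_bilin := h.mul_bilin.transport φ
  br_bilin := h.br_bilin.transport φ
  mul_assoc a b c := by simp [transportOp, h.mul_assoc]
  br_alt a := by simp [transportOp, h.br_alt]
  jacobi a b c := by simp [transportOp, ← map_add, h.jacobi]
  leibniz a b c := by simp [transportOp, h.leibniz]

theorem poissonIso_of_transport {A B : Type u} [AddCommGroup A] [Module k A] [AddCommGroup B]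
    [Module k B] (φ : A ≃ₗ[k] B) {mul br : A → A → A} {mul' br' : B → B → B}
    (h1 : transportOp φ mul = mul') (h2 : transportOp φ br = br') :
    PoissonIso k mul br mul' br' := by
  subst h1 h2
  exact ⟨φ, by simp [transportOp], by simp [transportOp]⟩

/-- A subspace and a complement of it give coordinates in which the subspace is the kernel of
the second projection. -/
theorem exists_adapted_equiv {E U V : Type u} [AddCommGroup E] [Module k E] [AddCommGroup U]
    [Module k U] [AddCommGroup V] [Module k V] [FiniteDimensional k E] [FiniteDimensional k U]
    [FiniteDimensional k V] (I : Submodule k E) (hI : Module.finrank k I = Module.finrank k U)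
    (hE : Module.finrank k E = Module.finrank k U + Module.finrank k V) :
    ∃ φ : E ≃ₗ[k] U × V, ∀ x, x ∈ I ↔ (φ x).2 = 0 := by
  obtain ⟨J, hJ⟩ := I.exists_isCompl
  have hJd : Module.finrank k J = Module.finrank k V := by
    have := Submodule.finrank_add_eq_of_isCompl hJ
    omega
  let e₁ := LinearEquiv.ofFinrankEq I U hI
  let e₂ := LinearEquiv.ofFinrankEq J V hJd
  refine ⟨(I.prodEquivOfIsCompl J hJ).symm.trans (e₁.prodCongr e₂), fun x => ?_⟩
  simp

/-! ### Abelian subspace of dimension two -/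

theorem exists_cMat_of_isPoisson {M R : (Fin 2 → k) × k → (Fin 2 → k) × k → (Fin 2 → k) × k}
    (h : IsPoisson k M R) (hM : ∀ u v, (M u v).2 = 0) (hR : ∀ u v, (R u v).2 = 0)
    (hM0 : ∀ a b, M (a, 0) (b, 0) = 0) (hR0 : ∀ a b, R (a, 0) (b, 0) = 0) :
    ∃ q : CMatSet2 k, M = mulModC2 k q.1 ∧ R = brModC2 k q.1 := by
  obtain ⟨m1, m2, m3, m4⟩ := h.mul_bilin
  obtain ⟨r1, r2, r3, r4⟩ := h.br_bilin
  have hadd : ∀ a b : Fin 2 → k, ((a + b, 0) : (Fin 2 → k) × k) = (a, 0) + (b, 0) := by simp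
  have hsmul : ∀ (c : k) (a : Fin 2 → k),
      ((c • a, 0) : (Fin 2 → k) × k) = c • (a, 0) := by simp
  let e : (Fin 2 → k) × k := (0, 1)
  let a : (Fin 2 → k) →ₗ[k] (Fin 2 → k) :=
    { toFun := fun x => (M e (x, 0)).1
      map_add' := fun x y => by rw [hadd, m3]; rfl
      map_smul' := fun c x => by rw [hsmul, m4]; rfl }
  let b : (Fin 2 → k) →ₗ[k] (Fin 2 → k) :=
    { toFun := fun x => (M (x, 0) e).1
      map_add' := fun x y => by rw [hadd, m1]; rfl
      map_smul' := fun c x => by rw [hsmul, m2]; rfl }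
  let c : (Fin 2 → k) →ₗ[k] (Fin 2 → k) :=
    { toFun := fun x => (R e (x, 0)).1
      map_add' := fun x y => by rw [hadd, r3]; rfl
      map_smul' := fun c x => by rw [hsmul, r4]; rfl }
  let t : Fin 2 → k := (M e e).1
  have ha : ∀ x, M e (x, 0) = (a x, 0) := fun x => Prod.ext rfl (hM _ _)
  have hb : ∀ x, M (x, 0) e = (b x, 0) := fun x => Prod.ext rfl (hM _ _)
  have hc : ∀ x, R e (x, 0) = (c x, 0) := fun x => Prod.ext rfl (hR _ _)
  have hc' : ∀ x, R (x, 0) e = (-c x, 0) := fun x => by rw [h.br_skew, hc]; simp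
  have ht : M e e = (t, 0) := Prod.ext rfl (hM _ _)
  have hdec : ∀ u : (Fin 2 → k) × k, u = (u.1, 0) + u.2 • e := fun u => by simp [e]
  -- The defining relations of `𝔠(2)` are instances of associativity and of the Leibniz law.
  have hab : ∀ x, a (b x) = b (a x) := fun x => by
    have := h.mul_assoc e (x, 0) e
    rw [ha, hb, hb, ha] at this
    exact (congrArg Prod.fst this).symm
  have haa : ∀ x, a (a x) = 0 := fun x => by
    have := h.mul_assoc e e (x, 0)
    rw [ha, ht, ha, hM0] at this
    exact (congrArg Prod.fst this).symm
  have hbb : ∀ x, b (b x) = 0 := fun x => by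
    have := h.mul_assoc (x, 0) e e
    rw [hb, ht, hb, hM0] at this
    exact congrArg Prod.fst this
  have hat : a t = b t := by
    have := h.mul_assoc e e e
    rw [ht, ha, hb] at this
    exact (congrArg Prod.fst this).symm
  have hct : c t = 0 := by
    have := h.leibniz e e e
    rw [ht, hc', h.br_alt, h.mul_bilin.zero_left, h.mul_bilin.zero_right] at this
    simpa using congrArg Prod.fst this
  have hac : ∀ x, a (c x) = c (a x) := fun x => by
    have := h.leibniz e (x, 0) e
    rw [ha, hc', hc', ha, h.br_alt, h.mul_bilin.zero_left] at this
    simpa using (congrArg Prod.fst this).symm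
  have hbc : ∀ x, b (c x) = c (b x) := fun x => by
    have := h.leibniz (x, 0) e e
    rw [hb, hc', hc', hb, h.br_alt, h.mul_bilin.zero_right] at this
    simpa using (congrArg Prod.fst this).symm
  have hca : ∀ x, c (a x) = -b (c x) := fun x => by
    have := h.leibniz e e (x, 0)
    rw [ht, hR0, hc, hb, ha] at this
    rw [← hac]
    exact (neg_eq_of_add_eq_zero_right (congrArg Prod.fst this).symm).symm
  let A := LinearMap.toMatrix' a
  let B := LinearMap.toMatrix' b
  let C := LinearMap.toMatrix' c
  have hA : ∀ x, A.mulVec x = a x := fun x => by simp [A]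
  have hB : ∀ x, B.mulVec x = b x := fun x => by simp [B]
  have hC : ∀ x, C.mulVec x = c x := fun x => by simp [C]
  have mext : ∀ X Y : Matrix (Fin 2) (Fin 2) k, (∀ x, X.mulVec x = Y.mulVec x) → X = Y :=
    fun X Y hXY => Matrix.toLin'.injective (LinearMap.ext fun x => by simpa using hXY x)
  refine ⟨⟨(A, B, C, t), ?_, ?_, ?_, ?_, ?_, ?_, ?_, ?_⟩, ?_, ?_⟩
  · refine mext _ _ fun x => ?_
    simp only [← Matrix.mulVec_mulVec, hA, hB, hab]
  · refine mext _ _ fun x => ?_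
    simp only [← Matrix.mulVec_mulVec, hA, hC, hac]
  · refine mext _ _ fun x => ?_
    simp only [Matrix.neg_mulVec, ← Matrix.mulVec_mulVec, hA, hB, hC, hca]
  · refine mext _ _ fun x => ?_
    simp only [Matrix.neg_mulVec, ← Matrix.mulVec_mulVec, hB, hC, hbc]
  · refine mext _ _ fun x => ?_
    simp only [← Matrix.mulVec_mulVec, hA, haa, Matrix.zero_mulVec]
  · refine mext _ _ fun x => ?_
    simp only [← Matrix.mulVec_mulVec, hB, hbb, Matrix.zero_mulVec]
  · simp only [hA, hB, hat]
  · simp only [hC, hct]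
  · funext u v
    conv_lhs => rw [hdec u, hdec v]
    simp only [m1, m2, m3, m4, hM0, ha, hb, ht, mulModC2, hA, hB]
    ext <;> simp <;> ring
  · funext u v
    conv_lhs => rw [hdec u, hdec v]
    simp only [r1, r2, r3, r4, hR0, hc, hc', h.br_alt, brModC2, hC]
    ext <;> simp <;> ring

/-! ### Abelian subspace of dimension one -/

theorem exists_MA_of_isPoisson {M R : (Fin 2 → k) × k → (Fin 2 → k) × k → (Fin 2 → k) × k}
    (h : IsPoisson k M R) (hM : ∀ u v, (M u v).1 = 0) (hR : ∀ u v, (R u v).1 = 0)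
    (hM0 : ∀ s t, M (0, s) (0, t) = 0) :
    (∃ tf : MA1 k 2, M = mulMod1 k 2 tf.1.1 ∧ R = brMod1 k 2 tf.1.2) ∨
    (∃ gf : MA2 k 2, M = mulMod2 k 2 ∧ R = brMod2 k 2 gf.1.1 gf.1.2) := by
  obtain ⟨m1, m2, m3, m4⟩ := h.mul_bilin
  obtain ⟨r1, r2, r3, r4⟩ := h.br_bilin
  have hadd : ∀ a b : Fin 2 → k, ((a + b, 0) : (Fin 2 → k) × k) = (a, 0) + (b, 0) := by simp
  have hsmul : ∀ (c : k) (a : Fin 2 → k),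
      ((c • a, 0) : (Fin 2 → k) × k) = c • (a, 0) := by simp
  let z : (Fin 2 → k) × k := (0, 1)
  have hz : ∀ u : (Fin 2 → k) × k, u.1 = 0 → u = u.2 • z := fun u hu => by
    ext <;> simp [z, hu]
  have hzz : M z z = 0 := hM0 1 1
  have hdec : ∀ u : (Fin 2 → k) × k, u = (u.1, 0) + u.2 • z := fun u => by simp [z]
  -- `x z = s z` forces `s² z = x (x z) = (x x) z = 0`, as `x x` lies in the span of `z`.
  have hMz : ∀ x, M x z = 0 := fun x => by
    have h1 := h.mul_assoc x x z
    rw [hz _ (hM x x), m2, hzz, smul_zero, hz _ (hM x z), m4, hz _ (hM x z), smul_smul] at h1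
    have h2 : (M x z).2 = 0 := by simpa [z] using congrArg Prod.snd h1
    rw [hz _ (hM x z), h2, zero_smul]
  have hzM : ∀ x, M z x = 0 := fun x => by
    have h1 := h.mul_assoc z x x
    rw [hz _ (hM x x), m4, hzz, smul_zero, hz _ (hM z x), m2, hz _ (hM z x), smul_smul] at h1
    have h2 : (M z x).2 = 0 := by simpa [z] using congrArg Prod.snd h1
    rw [hz _ (hM z x), h2, zero_smul]
  let θ : (Fin 2 → k) → (Fin 2 → k) → k := fun x y => (M (x, 0) (y, 0)).2
  let f : (Fin 2 → k) → (Fin 2 → k) → k := fun x y => (R (x, 0) (y, 0)).2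
  let γ : (Fin 2 → k) →ₗ[k] k :=
    { toFun := fun x => (R (x, 0) z).2
      map_add' := fun x y => by rw [hadd, r1]; rfl
      map_smul' := fun c x => by rw [hsmul, r2]; rfl }
  have hθ : ∀ x y, M (x, 0) (y, 0) = θ x y • z := fun x y => hz _ (hM _ _)
  have hf : ∀ x y, R (x, 0) (y, 0) = f x y • z := fun x y => hz _ (hR _ _)
  have hγ : ∀ x, R (x, 0) z = γ x • z := fun x => hz _ (hR _ _)
  have hγ' : ∀ x, R z (x, 0) = -(γ x • z) := fun x => by rw [h.br_skew, hγ]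
  have θbil : IsBilin k θ := by
    refine ⟨?_, ?_, ?_, ?_⟩ <;> intros <;> simp only [θ, hadd, hsmul, m1, m2, m3, m4] <;> rfl
  have fbil : IsBilin k f := by
    refine ⟨?_, ?_, ?_, ?_⟩ <;> intros <;> simp only [f, hadd, hsmul, r1, r2, r3, r4] <;> rfl
  have falt : ∀ x, f x x = 0 := fun x => by simp [f, h.br_alt]
  have hMeq : M = mulMod1 k 2 θ := by
    funext u v
    conv_lhs => rw [hdec u, hdec v]
    simp only [m1, m2, m3, m4, hMz, hzM, hθ, mulMod1]
    ext <;> simp [z]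
  have hReq : R = brMod2 k 2 γ f := by
    funext u v
    conv_lhs => rw [hdec u, hdec v]
    simp only [r1, r2, r3, r4, hf, hγ, hγ', h.br_alt, brMod2]
    ext <;> simp [z] <;> ring
  by_cases hγ0 : γ = 0
  · refine Or.inl ⟨⟨(θ, f), θbil, fbil, falt⟩, hMeq, ?_⟩
    rw [hReq]
    funext u v
    simp [brMod2, brMod1, hγ0]
  · refine Or.inr ⟨⟨(γ, f), hγ0, fbil, falt, fun x y w => ?_⟩, ?_, hReq⟩
    · have h1 := h.jacobi (x, 0) (y, 0) (w, 0)
      simp only [hf, r2, hγ'] at h1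
      have h2 := congrArg Prod.snd h1
      simp only [z, Prod.snd_add, Prod.smul_snd, Prod.snd_neg, smul_eq_mul, Prod.snd_zero] at h2
      linear_combination -h2
    · obtain ⟨w, hw⟩ : ∃ w, γ w ≠ 0 := by
        by_contra! hcon
        exact hγ0 (LinearMap.ext hcon)
      -- Both terms on the right of the Leibniz law are products with a multiple of `z`.
      have hθ0 : ∀ x y, θ x y = 0 := fun x y => by
        have h1 := h.leibniz (x, 0) (y, 0) (w, 0)
        rw [hθ, hf, hf, r2, hγ', m2, m4, hzM, hMz] at h1
        have h2 := congrArg Prod.snd h1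
        simpa [z, hw] using h2
      rw [hMeq]
      funext u v
      simp [mulMod1, mulMod2, hθ0]

end Helpers

/-- **Corollary 2.19.**  Every `3`-dimensional metabelian Poisson algebra is isomorphic to
`k³_{(A,B,C,θ₀)}` for some `(A,B,C,θ₀) ∈ 𝔠(2)`, or to `k³_{(θ,f)}` for some
`(θ,f) ∈ MA₁(k²,k)`, or to `k³_{(γ,f)}` for some `(γ,f) ∈ MA₂(k²,k)`. -/
theorem statement13 (E : Type u) [AddCommGroup E] [Module k E] (mulE brE : E → E → E)
    (hE : IsPoisson k mulE brE) (hmeta : IsMetabelian k mulE brE)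
    (hdim : Module.finrank k E = 3) :
    (∃ q : CMatSet2 k, PoissonIso k mulE brE (mulModC2 k q.1) (brModC2 k q.1)) ∨
    (∃ tf : MA1 k 2, PoissonIso k mulE brE (mulMod1 k 2 tf.1.1) (brMod1 k 2 tf.1.2)) ∨
    (∃ gf : MA2 k 2, PoissonIso k mulE brE (mulMod2 k 2) (brMod2 k 2 gf.1.1 gf.1.2)) := by
  obtain ⟨I, hI, hab⟩ := hmeta
  have : FiniteDimensional k E := Module.finite_of_finrank_pos (by omega)
  have hle : Module.finrank k I ≤ 3 := hdim ▸ I.finrank_le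
  -- If `I` is `0` or `E`, both operations vanish.
  have hzero : (∀ x y, mulE x y = 0 ∧ brE x y = 0) →
      ∃ tf : MA1 k 2, PoissonIso k mulE brE (mulMod1 k 2 tf.1.1) (brMod1 k 2 tf.1.2) := by
    intro h0
    let φ : E ≃ₗ[k] (Fin 2 → k) × k := LinearEquiv.ofFinrankEq _ _ (by simp [hdim])
    refine ⟨⟨(fun _ _ => 0, fun _ _ => 0), ?_, ?_, fun _ => rfl⟩, φ, ?_, ?_⟩
    · simp [IsBilin]
    · simp [IsBilin]
    · intro x y
      rw [(h0 x y).1, map_zero]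
      rfl
    · intro x y
      rw [(h0 x y).2, map_zero]
      rfl
  have hcases : Module.finrank k I = 0 ∨ Module.finrank k I = 1 ∨ Module.finrank k I = 2 ∨
      Module.finrank k I = 3 := by omega
  rcases hcases with hd | hd | hd | hd
  · have hbot : I = ⊥ := Submodule.finrank_eq_zero.mp hd
    subst hbot
    exact Or.inr (Or.inl (hzero fun x y => by simpa using hI x y))
  · obtain ⟨ψ, hψ⟩ := exists_adapted_equiv (U := k) (V := Fin 2 → k) I (by simp [hd])
      (by simp [hdim])
    let φ := ψ.trans (LinearEquiv.prodComm k k (Fin 2 → k))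
    have hφ : ∀ x, x ∈ I ↔ (φ x).1 = 0 := fun x => by simp [φ, hψ]
    have hmem : ∀ s : k, φ.symm (0, s) ∈ I := fun s => by simp [hφ]
    rcases exists_MA_of_isPoisson (hE.transport φ) (fun u v => (hφ _).1 (hI _ _).1)
      (fun u v => (hφ _).1 (hI _ _).2)
      (fun s t => by simp [transportOp, (hab _ (hmem s) _ (hmem t)).1]) with
      ⟨tf, h1, h2⟩ | ⟨gf, h1, h2⟩
    · exact Or.inr (Or.inl ⟨tf, poissonIso_of_transport φ h1 h2⟩)
    · exact Or.inr (Or.inr ⟨gf, poissonIso_of_transport φ h1 h2⟩)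
  · obtain ⟨φ, hφ⟩ := exists_adapted_equiv (U := Fin 2 → k) (V := k) I (by simp [hd])
      (by simp [hdim])
    have hmem : ∀ a : Fin 2 → k, φ.symm (a, 0) ∈ I := fun a => by simp [hφ]
    obtain ⟨q, h1, h2⟩ := exists_cMat_of_isPoisson (hE.transport φ)
      (fun u v => (hφ _).1 (hI _ _).1) (fun u v => (hφ _).1 (hI _ _).2)
      (fun a b => by simp [transportOp, (hab _ (hmem a) _ (hmem b)).1])
      (fun a b => by simp [transportOp, (hab _ (hmem a) _ (hmem b)).2])
    exact Or.inl ⟨q, poissonIso_of_transport φ h1 h2⟩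
  · have htop : I = ⊤ := Submodule.eq_top_of_finrank_eq (hd.trans hdim.symm)
    subst htop
    exact Or.inr (Or.inl (hzero fun x y => hab x trivial y trivial))

end Statement
end

section
/- Let P be a Poisson algebra over a field k. Then GPH²(P, k) is in bijection with the disjoint union (AF(P)/≡₁) ⊔ (NF(P)/≡₂), where: ≡₁ is the equivalence relation on AF(P) given by (λ, Λ, θ, γ, f) ≡₁ (λ', Λ', θ', γ', f') iff λ = λ', Λ = Λ', γ = γ' and there exists a linear map r : P → k with θ(p,q) = θ'(p,q) + r(q)λ'(p) + r(p)Λ'(q) − r(pq) and f(p,q) = f'(p,q) + r(q)γ'(p) − r(p)γ'(q) − r([p,q]) for all p,q ∈ P; and ≡₂ is the equivalence relation on NF(P) given by (λ, θ, u) ≡₂ (λ', θ', u') iff u = u' and there exists a linear map r : P → k with λ(p) = λ'(p) + r(p)u and θ(p,q) = θ'(p,q) + r(q)λ'(p) + r(p)λ'(q) − r(pq) + r(p)r(q)u for all p,q ∈ P. -/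
/-!
On the line `k` the structure maps of a crossed system are scalars: the actions `⇀`, `◁`, `▷` are
multiplication by linear forms `λ`, `Λ`, `γ` on `P`, the product of `k` is `x · y = uxy` for some
`u : k`, and the bracket of `k` vanishes, being alternating (`exists_eq_coflagDatum`). Evaluating
the Poisson axioms of `P ♯ k` on elements `(p, 0)` and `(0, 1)` turns them into the identities
`IsCoflag` in `(λ, Λ, θ, γ, f, u)`. If `u = 0` these are the axioms of an abelian co-flag datum.
If `u ≠ 0` they force `Λ = λ`, `γ = 0` and `f(p,q) = -u⁻¹ λ([p,q])`, so that exactly a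
non-abelian co-flag datum `(λ, θ, u)` survives; conversely, for this `f` the Jacobi and Leibniz
identities of `P ♯ k` follow by applying `λ` to those of `P` and cancelling `u`.

Hence crossed systems correspond bijectively to `AF(P) ⊔ NF(P)` (`crossedOfCoflag_bijective`).
Cohomologous systems share `u`, so the two parts are never mixed, and on each part the cohomology
relation is `≡₁`, respectively `≡₂` (`cohomologous_crossedOfCoflag_iff`). The bijection therefore
descends to the quotients.
-/

universe u

section Cohom

variable {k P V : Type u} [Field k] [AddCommGroup P] [Module k P]
  [AddCommGroup V] [Module k V]

/-- Two crossed systems are cohomologous: `·_V = ·'_V`, `[-,-]_V = [-,-]'_V` and there exists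
a linear map `r : P → V` implementing the deformation formulas. -/
def Cohomologous (mulP brP : P → P → P) (Om Om' : PreCrossedDatum k P V) : Prop :=
  Om.mulV = Om'.mulV ∧ Om.brV = Om'.brV ∧
  ∃ r : P →ₗ[k] V,
    (∀ (p : P) (x : V), Om.hl p x = Om'.hl p x + Om.mulV (r p) x) ∧
    (∀ (p : P) (x : V), Om.hr x p = Om'.hr x p + Om.mulV x (r p)) ∧
    (∀ p q, Om.theta p q = Om'.theta p q + Om'.hl p (r q) + Om'.hr (r p) q
        - r (mulP p q) + Om.mulV (r p) (r q)) ∧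
    (∀ (p : P) (x : V), Om.lact p x = Om'.lact p x + Om.brV (r p) x) ∧
    (∀ p q, Om.cf p q = Om'.cf p q + Om'.lact p (r q) - Om'.lact q (r p)
        + Om.brV (r p) (r q) - r (brP p q))

end Cohom

section Coflag

variable (k P : Type u) [Field k] [AddCommGroup P] [Module k P]

/-- An abelian co-flag datum `(λ, Λ, θ, γ, f)` of the Poisson algebra `(P, mulP, brP)`,
satisfying the axioms (AF1)-(AF7). -/
structure AbCoflagDatum (mulP brP : P → P → P) where
  lam : P →ₗ[k] k
  Lam : P →ₗ[k] k
  theta : P → P → k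
  gam : P →ₗ[k] k
  f : P → P → k
  theta_bilin : IsBilin k theta
  f_bilin : IsBilin k f
  -- (AF1)
  af1lam : ∀ p q, lam (mulP p q) = lam p * lam q
  af1Lam : ∀ p q, Lam (mulP p q) = Lam p * Lam q
  -- (AF2)
  af2 : ∀ p q r, theta p (mulP q r) - theta (mulP p q) r = theta p q * Lam r - theta q r * lam p
  -- (AF3)
  af3f : ∀ p, f p p = 0
  af3gam : ∀ p q, gam (brP p q) = 0
  -- (AF4)
  af4 : ∀ p q r, f p (brP q r) + f q (brP r p) + f r (brP p q)
      + gam p * f q r + gam q * f r p + gam r * f p q = 0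
  -- (AF5)
  af5 : ∀ p q r, f (mulP p q) r - Lam q * f p r - lam p * f q r
      = gam r * theta p q + theta (brP p r) q + theta p (brP q r)
  -- (AF6)
  af6 : ∀ p q, gam (mulP p q) = gam p * Lam q + lam p * gam q
  -- (AF7)
  af7lam : ∀ p q, lam (brP p q) = 0
  af7Lam : ∀ p q, Lam (brP p q) = 0

/-- A non-abelian co-flag datum `(λ, θ, u)` of `(P, mulP, brP)`, with `u ≠ 0`, satisfying
(NF1) and (NF2). -/
structure NAbCoflagDatum (mulP brP : P → P → P) where
  lam : P →ₗ[k] k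
  theta : P → P → k
  u : k
  u_ne : u ≠ 0
  theta_bilin : IsBilin k theta
  -- (NF1)
  nf1 : ∀ p q, lam (mulP p q) = lam p * lam q - u * theta p q
  -- (NF2)
  nf2 : ∀ p q r, theta p (mulP q r) - theta (mulP p q) r = theta p q * lam r - theta q r * lam p

end Coflag

section Statement

variable {k P : Type u} [Field k] [AddCommGroup P] [Module k P]

/-- The equivalence relation `≡₁` on the set `AF(P)` of abelian co-flag data. -/
def AbCoflagRel (mulP brP : P → P → P) (d d' : AbCoflagDatum k P mulP brP) : Prop :=
  d.lam = d'.lam ∧ d.Lam = d'.Lam ∧ d.gam = d'.gam ∧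
  ∃ r : P →ₗ[k] k,
    (∀ p q, d.theta p q = d'.theta p q + r q * d'.lam p + r p * d'.Lam q - r (mulP p q)) ∧
    (∀ p q, d.f p q = d'.f p q + r q * d'.gam p - r p * d'.gam q - r (brP p q))

/-- The equivalence relation `≡₂` on the set `NF(P)` of non-abelian co-flag data. -/
def NAbCoflagRel (mulP brP : P → P → P) (d d' : NAbCoflagDatum k P mulP brP) : Prop :=
  d.u = d'.u ∧
  ∃ r : P →ₗ[k] k,
    (∀ p, d.lam p = d'.lam p + r p * d'.u) ∧
    (∀ p q, d.theta p q = d'.theta p q + r q * d'.lam p + r p * d'.lam q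
        - r (mulP p q) + r p * r q * d'.u)

section CoflagClassification

/-! ### Crossed systems of `P` by the line `k` as scalar data -/

/-- The pre-crossed datum of `P` by `k` with `p ⇀ x = λ(p)x`, `x ◁ p = Λ(p)x`, `p ▷ x = γ(p)x`,
`x · y = uxy`, zero bracket on `k`, and cocycles `θ`, `f`. -/
def coflagDatum (lam Lam gam : P →ₗ[k] k) (theta f : P → P → k) (u : k)
    (ht : IsBilin k theta) (hf : IsBilin k f) : PreCrossedDatum k P k where
  hl p x := lam p * x
  hr x p := Lam p * x
  theta := theta
  mulV x y := u * (x * y)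
  lact p x := gam p * x
  cf := f
  brV _ _ := 0
  hl_bilin := by refine ⟨?_, ?_, ?_, ?_⟩ <;> intros <;> simp <;> ring
  hr_bilin := by refine ⟨?_, ?_, ?_, ?_⟩ <;> intros <;> simp <;> ring
  theta_bilin := ht
  mulV_bilin := by refine ⟨?_, ?_, ?_, ?_⟩ <;> intros <;> simp <;> ring
  lact_bilin := by refine ⟨?_, ?_, ?_, ?_⟩ <;> intros <;> simp <;> ring
  cf_bilin := hf
  brV_bilin := by refine ⟨?_, ?_, ?_, ?_⟩ <;> intros <;> simp

lemma IsBilin.sharpMul {mulP : P → P → P} (hm : IsBilin k mulP) (Om : PreCrossedDatum k P k) :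
    IsBilin k (sharpMul mulP Om) := by
  obtain ⟨m1, m2, m3, m4⟩ := hm
  obtain ⟨t1, t2, t3, t4⟩ := Om.theta_bilin
  obtain ⟨l1, l2, l3, l4⟩ := Om.hl_bilin
  obtain ⟨r1, r2, r3, r4⟩ := Om.hr_bilin
  obtain ⟨v1, v2, v3, v4⟩ := Om.mulV_bilin
  refine ⟨?_, ?_, ?_, ?_⟩ <;> intros <;> ext <;> simp only [_root_.sharpMul, Prod.fst_add,
    Prod.snd_add, Prod.smul_fst, Prod.smul_snd, smul_add, *] <;> abel

lemma IsBilin.sharpBr {brP : P → P → P} (hm : IsBilin k brP) (Om : PreCrossedDatum k P k) :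
    IsBilin k (sharpBr brP Om) := by
  obtain ⟨m1, m2, m3, m4⟩ := hm
  obtain ⟨t1, t2, t3, t4⟩ := Om.cf_bilin
  obtain ⟨l1, l2, l3, l4⟩ := Om.lact_bilin
  obtain ⟨v1, v2, v3, v4⟩ := Om.brV_bilin
  refine ⟨?_, ?_, ?_, ?_⟩ <;> intros <;> ext <;> simp only [_root_.sharpBr, Prod.fst_add,
    Prod.snd_add, Prod.smul_fst, Prod.smul_snd, smul_add, smul_sub, *] <;> abel

/-- A bilinear form vanishing on the diagonal is skew-symmetric. -/
lemma IsBilin.swap {f : P → P → k} (hf : IsBilin k f) (h : ∀ p, f p p = 0) (p q : P) :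
    f q p = -f p q := by
  have := h (p + q)
  rw [hf.1, hf.2.2.1, hf.2.2.1, h, h] at this
  linear_combination this

/-- The identities on `(λ, Λ, θ, γ, f, u)` expressing that `coflagDatum` is a crossed system;
they specialise to the two kinds of co-flag data according to whether `u = 0`. -/
structure IsCoflag (mulP brP : P → P → P) (lam Lam gam : P →ₗ[k] k) (theta f : P → P → k)
    (u : k) : Prop where
  lam_mul : ∀ p q, lam (mulP p q) = lam p * lam q - u * theta p q
  Lam_mul : ∀ p q, Lam (mulP p q) = Lam p * Lam q - u * theta p q
  u_comm : ∀ p, u * lam p = u * Lam p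
  cocycle : ∀ p q r,
    theta p (mulP q r) - theta (mulP p q) r = theta p q * Lam r - theta q r * lam p
  f_alt : ∀ p, f p p = 0
  gam_br : ∀ p q, gam (brP p q) = 0
  jac : ∀ p q r, f p (brP q r) + f q (brP r p) + f r (brP p q)
      + gam p * f q r + gam q * f r p + gam r * f p q = 0
  leib : ∀ p q r, f (mulP p q) r - Lam q * f p r - lam p * f q r
      = gam r * theta p q + theta (brP p r) q + theta p (brP q r)
  gam_mul : ∀ p q, gam (mulP p q) = gam p * Lam q + lam p * gam q
  lam_br : ∀ p q, lam (brP p q) = -(u * f p q)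
  Lam_br : ∀ p q, Lam (brP p q) = -(u * f p q)
  u_gam : ∀ p, u * gam p = 0

lemma isCrossedSystem_coflagDatum {mulP brP : P → P → P} (hP : IsPoisson k mulP brP)
    {lam Lam gam : P →ₗ[k] k} {theta f : P → P → k} {u : k}
    {ht : IsBilin k theta} {hf : IsBilin k f} (h : IsCoflag mulP brP lam Lam gam theta f u) :
    IsCrossedSystem mulP brP (coflagDatum lam Lam gam theta f u ht hf) where
  mul_bilin := hP.mul_bilin.sharpMul _
  br_bilin := hP.br_bilin.sharpBr _
  mul_assoc := by
    rintro ⟨p, x⟩ ⟨q, y⟩ ⟨r, z⟩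
    ext
    · exact hP.mul_assoc p q r
    · simp only [sharpMul, coflagDatum]
      linear_combination -h.cocycle p q r + z * h.lam_mul p q - x * h.Lam_mul q r
        - x * z * h.u_comm q
  br_alt := by
    rintro ⟨p, x⟩
    ext
    · exact hP.br_alt p
    · simp only [sharpBr, coflagDatum, Prod.snd_zero]
      linear_combination h.f_alt p
  jacobi := by
    rintro ⟨p, x⟩ ⟨q, y⟩ ⟨r, z⟩
    ext
    · exact hP.jacobi p q r
    · simp only [sharpBr, coflagDatum, Prod.snd_zero, Prod.snd_add]
      have hs := hf.swap h.f_alt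
      linear_combination -h.jac p q r + hs r (brP p q) + hs p (brP q r) + hs q (brP r p)
        + z * h.gam_br p q + x * h.gam_br q r + y * h.gam_br r p
  leibniz := by
    rintro ⟨p, x⟩ ⟨q, y⟩ ⟨r, z⟩
    ext
    · exact hP.leibniz p q r
    · simp only [sharpBr, sharpMul, coflagDatum, Prod.snd_add]
      linear_combination h.leib p q r + z * h.gam_mul p q - y * h.lam_br p r - x * h.Lam_br q r
        + (x * y * h.u_gam r - z * y * h.u_gam p - x * z * h.u_gam q)

lemma isCoflag_of_isCrossedSystem {mulP brP : P → P → P} (hP : IsPoisson k mulP brP)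
    {lam Lam gam : P →ₗ[k] k} {theta f : P → P → k} {u : k}
    {ht : IsBilin k theta} {hf : IsBilin k f}
    (h : IsCrossedSystem mulP brP (coflagDatum lam Lam gam theta f u ht hf)) :
    IsCoflag mulP brP lam Lam gam theta f u := by
  have hA := fun p x q y r z => congrArg Prod.snd (h.mul_assoc (p, x) (q, y) (r, z))
  have hB := fun p x => congrArg Prod.snd (h.br_alt (p, x))
  have hJ := fun p x q y r z => congrArg Prod.snd (h.jacobi (p, x) (q, y) (r, z))
  have hL := fun p x q y r z => congrArg Prod.snd (h.leibniz (p, x) (q, y) (r, z))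
  simp only [sharpBr, sharpMul, coflagDatum, Prod.snd_zero, Prod.snd_add] at hA hB hJ hL
  have f_alt : ∀ p, f p p = 0 := fun p => by linear_combination hB p 0
  have hs := hf.swap f_alt
  have t0 : ∀ p, theta p 0 = 0 := fun p => by simpa using ht.2.2.2 0 p 0
  have f0' : ∀ p, f 0 p = 0 := fun p => by simpa using hf.2.1 0 0 p
  have m0 : ∀ p, mulP p 0 = 0 := fun p => by simpa using hP.mul_bilin.2.2.2 0 p 0
  have b0' : ∀ p, brP 0 p = 0 := fun p => by simpa using hP.br_bilin.2.1 0 0 p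
  have u_gam : ∀ p, u * gam p = 0 := fun p => by
    have := hL 0 1 0 1 p 0
    simp only [t0, f0', m0, b0', map_zero] at this
    linear_combination this
  refine ⟨fun p q => ?_, fun p q => ?_, fun p => ?_, fun p q r => ?_, f_alt, fun p q => ?_,
    fun p q r => ?_, fun p q r => ?_, fun p q => ?_, fun p q => ?_, fun p q => ?_, u_gam⟩
  · linear_combination hA p 0 q 0 0 1 - hA p 0 q 0 0 0
  · linear_combination -hA 0 1 p 0 q 0 + hA 0 0 p 0 q 0
  · linear_combination -hA 0 1 p 0 0 1 + hA 0 1 p 0 0 0 + hA 0 0 p 0 0 1 - hA 0 0 p 0 0 0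
  · linear_combination -hA p 0 q 0 r 0
  · linear_combination hJ p 0 q 0 0 1 - hJ p 0 q 0 0 0
  · linear_combination -hJ p 0 q 0 r 0 + hs r (brP p q) + hs p (brP q r) + hs q (brP r p)
  · linear_combination hL p 0 q 0 r 0
  · linear_combination hL p 0 q 0 0 1 - hL p 0 q 0 0 0
  · linear_combination -hL p 0 0 1 q 0 + hL p 0 0 0 q 0
  · linear_combination -hL 0 1 p 0 q 0 + hL 0 0 p 0 q 0

lemma PreCrossedDatum.eq_of_fields {Om Om' : PreCrossedDatum k P k} (h1 : Om.hl = Om'.hl)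
    (h2 : Om.hr = Om'.hr) (h3 : Om.theta = Om'.theta) (h4 : Om.mulV = Om'.mulV)
    (h5 : Om.lact = Om'.lact) (h6 : Om.cf = Om'.cf) (h7 : Om.brV = Om'.brV) : Om = Om' := by
  cases Om
  cases Om'
  subst h1 h2 h3 h4 h5 h6 h7
  rfl

/-- Every crossed system of `P` by the line `k` comes from scalar data: an action on `k` is
multiplication by a linear form, and an alternating bracket on `k` vanishes. -/
lemma exists_eq_coflagDatum {mulP brP : P → P → P} (hP : IsPoisson k mulP brP)
    (Om : PreCrossedDatum k P k) (h : IsCrossedSystem mulP brP Om) :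
    ∃ lam Lam gam theta f u ht hf, Om = coflagDatum lam Lam gam theta f u ht hf := by
  have b0 : brP 0 0 = 0 := by simpa using hP.br_bilin.2.2.2 0 0 0
  have hB := congrArg Prod.snd (h.br_alt (0, 1))
  obtain ⟨hl, hr, theta, mulV, lact, cf, brV, h1, h2, h3, h4, h5, h6, h7⟩ := Om
  have f0 : cf 0 0 = 0 := by simpa using h6.2.2.2 0 0 0
  simp only [sharpBr, f0, Prod.snd_zero] at hB
  have scal {A : Type u} [AddCommGroup A] [Module k A] {g : A → k → k} (hg : IsBilin k g)
      (a : A) (x : k) : g a x = g a 1 * x := by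
    simpa [mul_comm] using hg.2.2.2 x a 1
  have scal' {A : Type u} [AddCommGroup A] [Module k A] {g : k → A → k} (hg : IsBilin k g)
      (a : A) (x : k) : g x a = g 1 a * x := by
    simpa [mul_comm] using hg.2.1 x 1 a
  refine ⟨⟨⟨fun p => hl p 1, fun _ _ => h1.1 _ _ _⟩, fun _ _ => h1.2.1 _ _ _⟩,
    ⟨⟨fun p => hr 1 p, fun _ _ => h2.2.2.1 _ _ _⟩, fun _ _ => h2.2.2.2 _ _ _⟩,
    ⟨⟨fun p => lact p 1, fun _ _ => h5.1 _ _ _⟩, fun _ _ => h5.2.1 _ _ _⟩,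
    theta, cf, mulV 1 1, h3, h6, ?_⟩
  refine PreCrossedDatum.eq_of_fields (funext₂ fun p x => scal h1 p x)
    (funext₂ fun x p => scal' h2 p x) rfl (funext₂ fun x y => ?_)
    (funext₂ fun p x => scal h5 p x) rfl (funext₂ fun x y => ?_)
  · simp only [coflagDatum]
    rw [scal h4 x y, scal' h4 1 x, mul_assoc]
  · simp only [coflagDatum]
    rw [scal h7 x y, scal' h7 1 x]
    linear_combination (x * y) * hB

/-! ### The two kinds of co-flag data and their crossed systems -/

variable {mulP brP : P → P → P}

lemma AbCoflagDatum.isCoflag (d : AbCoflagDatum k P mulP brP) :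
    IsCoflag mulP brP d.lam d.Lam d.gam d.theta d.f 0 where
  lam_mul p q := by rw [d.af1lam]; ring
  Lam_mul p q := by rw [d.af1Lam]; ring
  u_comm p := by ring
  cocycle := d.af2
  f_alt := d.af3f
  gam_br := d.af3gam
  jac := d.af4
  leib := d.af5
  gam_mul := d.af6
  lam_br p q := by rw [d.af7lam]; ring
  Lam_br p q := by rw [d.af7Lam]; ring
  u_gam p := by ring

/-- In the non-abelian case the Lie cocycle is forced: `f(p,q) = -u⁻¹ λ([p,q])`. -/
def NAbCoflagDatum.f (d : NAbCoflagDatum k P mulP brP) (p q : P) : k :=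
  -(d.u⁻¹ * d.lam (brP p q))

lemma NAbCoflagDatum.f_bilin (hP : IsPoisson k mulP brP) (d : NAbCoflagDatum k P mulP brP) :
    IsBilin k d.f := by
  obtain ⟨m1, m2, m3, m4⟩ := hP.br_bilin
  refine ⟨?_, ?_, ?_, ?_⟩ <;> intros <;>
    simp only [NAbCoflagDatum.f, m1, m2, m3, m4, map_add, map_smul, smul_eq_mul] <;> ring

lemma NAbCoflagDatum.isCoflag (hP : IsPoisson k mulP brP) (d : NAbCoflagDatum k P mulP brP) :
    IsCoflag mulP brP d.lam d.lam 0 d.theta d.f d.u := by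
  have hu := inv_mul_cancel₀ d.u_ne
  have hf (p q : P) : d.lam (brP p q) = -(d.u * d.f p q) := by
    simp only [NAbCoflagDatum.f]
    linear_combination -d.lam (brP p q) * hu
  have alt (p : P) : d.f p p = 0 := by simp [NAbCoflagDatum.f, hP.br_alt]
  have hs := (d.f_bilin hP).swap alt
  refine ⟨d.nf1, d.nf1, fun _ => rfl, d.nf2, alt, fun _ _ => rfl, fun p q r => ?_,
    fun p q r => ?_, fun p q => by simp, hf, hf, fun p => by simp⟩
  · have hj := congrArg d.lam (hP.jacobi p q r)
    simp only [map_add, map_zero, hf] at hj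
    apply mul_left_cancel₀ d.u_ne
    simp only [LinearMap.zero_apply]
    linear_combination hj + d.u * (hs (brP p q) r + hs (brP q r) p + hs (brP r p) q)
  · have hl := congrArg d.lam (hP.leibniz p q r)
    simp only [map_add, d.nf1, hf] at hl
    apply mul_left_cancel₀ d.u_ne
    simp only [LinearMap.zero_apply]
    linear_combination -hl

/-- The crossed system attached to a co-flag datum of either kind. -/
def crossedOfCoflag (hP : IsPoisson k mulP brP) :
    AbCoflagDatum k P mulP brP ⊕ NAbCoflagDatum k P mulP brP →
      {Om : PreCrossedDatum k P k // IsCrossedSystem mulP brP Om}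
  | .inl d => ⟨coflagDatum d.lam d.Lam d.gam d.theta d.f 0 d.theta_bilin d.f_bilin,
      isCrossedSystem_coflagDatum hP d.isCoflag⟩
  | .inr d => ⟨coflagDatum d.lam d.lam 0 d.theta d.f d.u d.theta_bilin (d.f_bilin hP),
      isCrossedSystem_coflagDatum hP (d.isCoflag hP)⟩

/-- The scalar data are determined by the pre-crossed datum. -/
lemma coflagDatum_inj {lam Lam gam lam' Lam' gam' : P →ₗ[k] k} {theta f theta' f' : P → P → k}
    {u u' : k} {ht hf ht' hf'}
    (h : coflagDatum lam Lam gam theta f u ht hf = coflagDatum lam' Lam' gam' theta' f' u' ht' hf') :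
    lam = lam' ∧ Lam = Lam' ∧ gam = gam' ∧ theta = theta' ∧ f = f' ∧ u = u' := by
  refine ⟨?_, ?_, ?_, congrArg PreCrossedDatum.theta h, congrArg PreCrossedDatum.cf h, ?_⟩
  · ext p; simpa [coflagDatum] using congrFun₂ (congrArg PreCrossedDatum.hl h) p 1
  · ext p; simpa [coflagDatum] using congrFun₂ (congrArg PreCrossedDatum.hr h) 1 p
  · ext p; simpa [coflagDatum] using congrFun₂ (congrArg PreCrossedDatum.lact h) p 1
  · simpa [coflagDatum] using congrFun₂ (congrArg PreCrossedDatum.mulV h) 1 1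

lemma crossedOfCoflag_bijective (hP : IsPoisson k mulP brP) :
    Function.Bijective (crossedOfCoflag (k := k) hP) := by
  constructor
  · rintro (d | d) (d' | d') h <;>
      obtain ⟨h1, h2, h3, h4, h5, h6⟩ := coflagDatum_inj (congrArg Subtype.val h)
    · cases d; cases d'; simp_all
    · exact absurd h6.symm d'.u_ne
    · exact absurd h6 d.u_ne
    · cases d; cases d'; simp_all
  · rintro ⟨Om, h⟩
    obtain ⟨lam, Lam, gam, theta, f, u, ht, hf, rfl⟩ := exists_eq_coflagDatum hP Om h
    have c := isCoflag_of_isCrossedSystem hP h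
    by_cases hu : u = 0
    · subst hu
      exact ⟨.inl ⟨lam, Lam, theta, gam, f, ht, hf, by simpa using c.lam_mul,
        by simpa using c.Lam_mul, c.cocycle, c.f_alt, c.gam_br, c.jac, c.leib, c.gam_mul,
        by simpa using c.lam_br, by simpa using c.Lam_br⟩, rfl⟩
    · obtain rfl : lam = Lam := LinearMap.ext fun p => mul_left_cancel₀ hu (c.u_comm p)
      obtain rfl : gam = 0 :=
        LinearMap.ext fun p => mul_left_cancel₀ hu ((c.u_gam p).trans (mul_zero u).symm)
      refine ⟨.inr ⟨lam, theta, u, hu, ht, c.lam_mul, c.cocycle⟩, Subtype.ext ?_⟩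
      have : f = fun p q => -(u⁻¹ * lam (brP p q)) := by
        funext p q
        rw [c.lam_br]
        field_simp
      subst this
      rfl

/-! ### Comparison of the equivalence relations -/

lemma cohomologous_crossedOfCoflag_iff (hP : IsPoisson k mulP brP)
    (a b : AbCoflagDatum k P mulP brP ⊕ NAbCoflagDatum k P mulP brP) :
    Sum.LiftRel (AbCoflagRel mulP brP) (NAbCoflagRel mulP brP) a b ↔
      Cohomologous mulP brP (crossedOfCoflag hP a).1 (crossedOfCoflag hP b).1 := by
  -- Equality of the products `uxy` on `k` forces equality of the scalars `u`.
  have hu {u u' : k} (h : (fun x y : k => u * (x * y)) = fun x y => u' * (x * y)) : u = u' := by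
    simpa using congrFun₂ h 1 1
  rcases a with d | d <;> rcases b with d' | d'
  · simp only [Sum.liftRel_inl_inl]
    simp only [AbCoflagRel, Cohomologous, crossedOfCoflag, coflagDatum, true_and]
    constructor
    · rintro ⟨h1, h2, h3, r, h4, h5⟩
      refine ⟨r, fun p x => by rw [h1]; ring, fun p x => by rw [h2]; ring,
        fun p q => by rw [h4]; ring, fun p x => by rw [h3]; ring, fun p q => by rw [h5]; ring⟩
    · rintro ⟨r, h1, h2, h3, h4, h5⟩
      refine ⟨LinearMap.ext fun p => by simpa using h1 p 1,
        LinearMap.ext fun p => by simpa using h2 p 1,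
        LinearMap.ext fun p => by simpa using h4 p 1, r,
        fun p q => by rw [h3]; ring, fun p q => by rw [h5]; ring⟩
  · refine iff_of_false (by simp) fun h => d'.u_ne (hu h.1).symm
  · refine iff_of_false (by simp) fun h => d.u_ne (hu h.1)
  · simp only [Sum.liftRel_inr_inr]
    simp only [NAbCoflagRel, Cohomologous, crossedOfCoflag, coflagDatum, true_and]
    constructor
    · rintro ⟨h1, r, h2, h3⟩
      refine ⟨by rw [h1], r, fun p x => by rw [h2, h1]; ring, fun p x => by rw [h2, h1]; ring,
        fun p q => by rw [h3, h1]; ring, fun p x => by simp, fun p q => ?_⟩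
      have hi := inv_mul_cancel₀ d'.u_ne
      simp only [NAbCoflagDatum.f, h1, h2, LinearMap.zero_apply]
      linear_combination -r (brP p q) * hi
    · rintro ⟨h, r, h1, h2, h3, -, -⟩
      have h' := hu h
      refine ⟨h', r, fun p => ?_, fun p q => ?_⟩
      · linear_combination h1 p 1 + r p * h'
      · linear_combination h3 p q + r p * r q * h'

/-- The quotient of a disjoint union by a relation that does not mix the two parts. -/
def quotLiftRelEquiv {α β : Type*} (R : α → α → Prop) (S : β → β → Prop) :
    Quot (Sum.LiftRel R S) ≃ Quot R ⊕ Quot S where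
  toFun := Quot.lift (Sum.map (Quot.mk R) (Quot.mk S)) fun _ _ h => by
    cases h with
    | inl h => exact congrArg Sum.inl (Quot.sound h)
    | inr h => exact congrArg Sum.inr (Quot.sound h)
  invFun := Sum.elim (Quot.map Sum.inl fun _ _ => Sum.LiftRel.inl)
    (Quot.map Sum.inr fun _ _ => Sum.LiftRel.inr)
  left_inv := by rintro ⟨_ | _⟩ <;> rfl
  right_inv := by
    rintro (a | b)
    · induction a using Quot.ind; rfl
    · induction b using Quot.ind; rfl

end CoflagClassification

/-- **Theorem 3.4.**  For any Poisson algebra `P`,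
`GPH²(P, k) ≅ (AF(P)/≡₁) ⊔ (NF(P)/≡₂)`. -/
theorem statement15 (mulP brP : P → P → P) (hP : IsPoisson k mulP brP) :
    Nonempty
      (Quot (fun Om Om' : {Om : PreCrossedDatum k P k // IsCrossedSystem mulP brP Om} =>
          Cohomologous mulP brP Om.1 Om'.1) ≃
       (Quot (AbCoflagRel (k := k) mulP brP) ⊕ Quot (NAbCoflagRel (k := k) mulP brP))) := by
  exact ⟨(Quot.congr (Equiv.ofBijective _ (crossedOfCoflag_bijective hP))
    (cohomologous_crossedOfCoflag_iff hP)).symm.trans (quotLiftRelEquiv _ _)⟩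

end Statement
end
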